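/- Let a, b, ν ∈ ℂ and define F(w₀,w₁,w₂,w₃) := −(w₀w₁w₂ + w₁w₂w₃ + w₁²w₂ + w₂w₃² + 2w₁w₂² + 2w₂²w₃ + w₂³ + ν(w₁w₂ + w₂w₃ + w₂²) + b·w₂ + a)/(w₂w₃), and φ(w₀,w₁,w₂,w₃) := (w₁, w₂, w₃, F(w₀,w₁,w₂,w₃)), the birational map defined by the (P.iv) recurrence. Then φ is a Poisson map for the (P.iv) Poisson bracket: for every w = (w₀,w₁,w₂,w₃) ∈ ℂ⁴ with w₁, w₂, w₃ all nonzero, and for all indices 0 ≤ i, j ≤ 3, Σ_{0 ≤ k, l ≤ 3} (∂φ_i/∂w_k)(w) · Π_{kl}(w) · (∂φ_j/∂w_l)(w) = Π_{ij}(φ(w)), where ∂/∂w_k denotes the complex partial derivative (each φ_i is a rational function, holomorphic where w₂w₃ ≠ 0). -/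

import Mathlib

/-- The antisymmetric structure matrix `Π(w)` of the (P.iv) Poisson bracket. -/
noncomputable def PivPi (ν : ℂ) (w : Fin 4 → ℂ) : Matrix (Fin 4) (Fin 4) ℂ :=
  !![0, 0, 1 / w 1, -((w 0 + 2 * w 1 + 2 * w 2 + w 3 + ν) / (w 1 * w 2));
     0, 0, 0, 1 / w 2;
     -(1 / w 1), 0, 0, 0;
     (w 0 + 2 * w 1 + 2 * w 2 + w 3 + ν) / (w 1 * w 2), -(1 / w 2), 0, 0]

/-- The rational function `F` defining the fourth component of the (P.iv) map. -/
noncomputable def pivF (a b ν : ℂ) (w : Fin 4 → ℂ) : ℂ :=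
  -(w 0 * w 1 * w 2 + w 1 * w 2 * w 3 + w 1 ^ 2 * w 2 + w 2 * w 3 ^ 2
      + 2 * w 1 * w 2 ^ 2 + 2 * w 2 ^ 2 * w 3 + w 2 ^ 3
      + ν * (w 1 * w 2 + w 2 * w 3 + w 2 ^ 2) + b * w 2 + a) / (w 2 * w 3)

/-- The (P.iv) birational map `φ(w₀,w₁,w₂,w₃) = (w₁,w₂,w₃,F(w₀,w₁,w₂,w₃))`. -/
noncomputable def pivPhi (a b ν : ℂ) (w : Fin 4 → ℂ) : Fin 4 → ℂ :=
  ![w 1, w 2, w 3, pivF a b ν w]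

/-- The complex partial derivative `∂f/∂w_k` of a function `f : ℂ⁴ → ℂ` at the point `w`. -/
noncomputable def cpderiv (f : (Fin 4 → ℂ) → ℂ) (k : Fin 4) (w : Fin 4 → ℂ) : ℂ :=
  deriv (fun z : ℂ => f (Function.update w k z)) (w k)

/-!
Put `w₄ = F(w₀, w₁, w₂, w₃)` and `S = w₀ + 2w₁ + 2w₂ + w₃ + ν`. The recurrence relating `w₀, …, w₄`
is invariant under the reversal `wᵢ ↔ w₄₋ᵢ`, so implicit differentiation gives
`∂F/∂w₁ = -S(w) / w₃` and, by symmetry, `∂F/∂w₃ = -S(φ w) / w₃`; moreover `∂F/∂w₀ = -w₁ / w₃`.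
As `Π` is shift invariant and antisymmetric, only the three brackets `{wᵢ, F}`, `i = 1, 2, 3`, have
to be computed, and `∂F/∂w₂` does not enter them because `{wᵢ, w₂} = 0` for these `i`.
-/

section QuadraticDerivatives

variable {𝕜 : Type*} [NontriviallyNormedField 𝕜]

theorem hasDerivAt_quadratic (p q r x : 𝕜) :
    HasDerivAt (fun z => p * z ^ 2 + q * z + r) (2 * p * x + q) x := by
  have h := (((hasDerivAt_pow 2 x).const_mul p).add ((hasDerivAt_id x).const_mul q)).add_const r
  exact h.congr_deriv (by push_cast; ring)

theorem hasDerivAt_quadratic_div_id (p q r : 𝕜) {x : 𝕜} (hx : x ≠ 0) :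
    HasDerivAt (fun z => (p * z ^ 2 + q * z + r) / z)
      ((2 * p * x + q - (p * x ^ 2 + q * x + r) / x) / x) x := by
  refine ((hasDerivAt_quadratic p q r x).div (hasDerivAt_id x) hx).congr_deriv ?_
  simp only [id_eq]
  field_simp

end QuadraticDerivatives

section StructureBracket

/-- The bracket `{f, g} = ∑ₖₗ ∂ₖf · Pₖₗ · ∂ₗg` on `ℂ⁴` with structure matrix `P`; it is defined for
every matrix field `P`, whether or not antisymmetry and the Jacobi identity hold. -/
noncomputable def structureBracket (P : (Fin 4 → ℂ) → Matrix (Fin 4) (Fin 4) ℂ)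
    (f g : (Fin 4 → ℂ) → ℂ) (w : Fin 4 → ℂ) : ℂ :=
  ∑ k, ∑ l, cpderiv f k w * P w k l * cpderiv g l w

variable {P : (Fin 4 → ℂ) → Matrix (Fin 4) (Fin 4) ℂ} {w : Fin 4 → ℂ}

theorem cpderiv_coord (m k : Fin 4) (w : Fin 4 → ℂ) :
    cpderiv (fun v => v m) k w = if m = k then 1 else 0 := by
  by_cases h : m = k
  · subst h
    simp [cpderiv]
  · simp [cpderiv, h]

theorem structureBracket_coord_left (m : Fin 4) (g : (Fin 4 → ℂ) → ℂ) :
    structureBracket P (fun v => v m) g w = ∑ l, P w m l * cpderiv g l w := by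
  simp [structureBracket, cpderiv_coord]

theorem structureBracket_coord_coord (m n : Fin 4) :
    structureBracket P (fun v => v m) (fun v => v n) w = P w m n := by
  simp [structureBracket_coord_left, cpderiv_coord]

theorem structureBracket_swap (hP : (P w).transpose = -P w) (f g : (Fin 4 → ℂ) → ℂ) :
    structureBracket P f g w = -structureBracket P g f w := by
  have hanti (k l : Fin 4) : P w l k = -P w k l := congrFun₂ hP k l
  rw [structureBracket, Finset.sum_comm]
  simp only [structureBracket, ← Finset.sum_neg_distrib]
  refine Finset.sum_congr rfl fun k _ => Finset.sum_congr rfl fun l _ => ?_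
  rw [hanti k l]
  ring

theorem structureBracket_self (hP : (P w).transpose = -P w) (f : (Fin 4 → ℂ) → ℂ) :
    structureBracket P f f w = 0 :=
  self_eq_neg.mp (structureBracket_swap hP f f)

end StructureBracket

theorem PivPi_transpose (ν : ℂ) (w : Fin 4 → ℂ) : (PivPi ν w).transpose = -PivPi ν w := by
  ext i j
  fin_cases i <;> fin_cases j <;> simp [PivPi]

theorem PivPi_diag (ν : ℂ) (w : Fin 4 → ℂ) (i : Fin 4) : PivPi ν w i i = 0 :=
  self_eq_neg.mp (congrFun₂ (PivPi_transpose ν w) i i)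

theorem PivPi_succ_succ (a b ν : ℂ) (w : Fin 4 → ℂ) (i j : Fin 3) :
    PivPi ν w i.succ j.succ = PivPi ν (pivPhi a b ν w) i.castSucc j.castSucc := by
  fin_cases i <;> fin_cases j <;> rfl

/-- The affine form `S(w) = w₀ + 2w₁ + 2w₂ + w₃ + ν`, for which `Π₀₃ = -S(w) / (w₁w₂)`. -/
def pivS (ν : ℂ) (w : Fin 4 → ℂ) : ℂ :=
  w 0 + 2 * w 1 + 2 * w 2 + w 3 + ν

section HamiltonianVectorFields

variable (ν : ℂ) (g : (Fin 4 → ℂ) → ℂ) (w : Fin 4 → ℂ)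

theorem structureBracket_PivPi_coord_one :
    structureBracket (PivPi ν) (fun v => v 1) g w = 1 / w 2 * cpderiv g 3 w := by
  simp [structureBracket_coord_left, Fin.sum_univ_four, PivPi]

theorem structureBracket_PivPi_coord_two :
    structureBracket (PivPi ν) (fun v => v 2) g w = -(1 / w 1) * cpderiv g 0 w := by
  simp [structureBracket_coord_left, Fin.sum_univ_four, PivPi]

theorem structureBracket_PivPi_coord_three :
    structureBracket (PivPi ν) (fun v => v 3) g w =
      pivS ν w / (w 1 * w 2) * cpderiv g 0 w + -(1 / w 2) * cpderiv g 1 w := by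
  simp [structureBracket_coord_left, Fin.sum_univ_four, PivPi, pivS]

end HamiltonianVectorFields

section Piv

variable (a b ν : ℂ) {w : Fin 4 → ℂ}

theorem pivF_eq_div (h2 : w 2 ≠ 0) :
    pivF a b ν w = -(w 0 * w 1 + w 1 * w 3 + w 1 ^ 2 + w 3 ^ 2 + 2 * w 1 * w 2 + 2 * w 2 * w 3
      + w 2 ^ 2 + ν * (w 1 + w 3 + w 2) + b + a / w 2) / w 3 := by
  rw [pivF, ← mul_div_mul_left _ (w 3) h2]
  congr 1
  field_simp

theorem cpderiv_pivF_zero (h2 : w 2 ≠ 0) : cpderiv (pivF a b ν) 0 w = -(w 1 / w 3) := by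
  have affine : (fun z => pivF a b ν (Function.update w 0 z)) = fun z =>
      -(w 1 / w 3) * z + pivF a b ν (Function.update w 0 0) := by
    funext z
    rw [pivF_eq_div a b ν (by simpa using h2), pivF_eq_div a b ν (by simpa using h2)]
    simp only [ne_eq, one_ne_zero, Fin.reduceEq, not_false_eq_true, Function.update_of_ne,
      Function.update_self]
    ring
  rw [cpderiv, affine, deriv_add_const, deriv_const_mul_id]

theorem cpderiv_pivF_one (h2 : w 2 ≠ 0) :
    cpderiv (pivF a b ν) 1 w = -(pivS ν w / w 3) := by
  have quadratic : (fun z => pivF a b ν (Function.update w 1 z)) = fun z =>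
      -(1 / w 3) * z ^ 2 + -((w 0 + 2 * w 2 + w 3 + ν) / w 3) * z
        + pivF a b ν (Function.update w 1 0) := by
    funext z
    rw [pivF_eq_div a b ν (by simpa using h2), pivF_eq_div a b ν (by simpa using h2)]
    simp only [ne_eq, zero_ne_one, Fin.reduceEq, not_false_eq_true, Function.update_of_ne,
      Function.update_self]
    ring
  rw [cpderiv, quadratic, (hasDerivAt_quadratic _ _ _ _).deriv, pivS]
  ring

theorem cpderiv_pivF_three (h2 : w 2 ≠ 0) (h3 : w 3 ≠ 0) :
    cpderiv (pivF a b ν) 3 w = -(pivS ν (pivPhi a b ν w) / w 3) := by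
  let r := -(w 0 * w 1 + w 1 ^ 2 + 2 * w 1 * w 2 + w 2 ^ 2 + ν * (w 1 + w 2) + b + a / w 2)
  have quadratic_div (z : ℂ) : pivF a b ν (Function.update w 3 z) =
      (-1 * z ^ 2 + -(w 1 + 2 * w 2 + ν) * z + r) / z := by
    rw [pivF_eq_div a b ν (by simpa using h2)]
    simp only [ne_eq, Fin.reduceEq, not_false_eq_true, Function.update_of_ne,
      Function.update_self, r]
    ring
  have value : pivF a b ν w = (-1 * w 3 ^ 2 + -(w 1 + 2 * w 2 + ν) * w 3 + r) / w 3 := by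
    rw [← quadratic_div, Function.update_eq_self]
  have pivS_pivPhi : pivS ν (pivPhi a b ν w) = w 1 + 2 * w 2 + 2 * w 3 + pivF a b ν w + ν := rfl
  rw [cpderiv, funext quadratic_div, (hasDerivAt_quadratic_div_id _ _ _ h3).deriv, ← value,
    pivS_pivPhi]
  ring

theorem structureBracket_coord_one_pivF (h2 : w 2 ≠ 0) (h3 : w 3 ≠ 0) :
    structureBracket (PivPi ν) (fun v => v 1) (pivF a b ν) w =
      -(pivS ν (pivPhi a b ν w) / (w 2 * w 3)) := by
  rw [structureBracket_PivPi_coord_one, cpderiv_pivF_three a b ν h2 h3]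
  ring

theorem structureBracket_coord_two_pivF (h1 : w 1 ≠ 0) (h2 : w 2 ≠ 0) :
    structureBracket (PivPi ν) (fun v => v 2) (pivF a b ν) w = 1 / w 3 := by
  rw [structureBracket_PivPi_coord_two, cpderiv_pivF_zero a b ν h2]
  field_simp

theorem structureBracket_coord_three_pivF (h1 : w 1 ≠ 0) (h2 : w 2 ≠ 0) :
    structureBracket (PivPi ν) (fun v => v 3) (pivF a b ν) w = 0 := by
  rw [structureBracket_PivPi_coord_three, cpderiv_pivF_zero a b ν h2, cpderiv_pivF_one a b ν h2]
  field_simp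
  ring

theorem structureBracket_coord_succ_pivF (h1 : w 1 ≠ 0) (h2 : w 2 ≠ 0) (h3 : w 3 ≠ 0)
    (i : Fin 3) :
    structureBracket (PivPi ν) (fun v => v i.succ) (pivF a b ν) w =
      PivPi ν (pivPhi a b ν w) i.castSucc (Fin.last 3) := by
  fin_cases i
  · exact structureBracket_coord_one_pivF a b ν h2 h3
  · exact structureBracket_coord_two_pivF a b ν h1 h2
  · exact structureBracket_coord_three_pivF a b ν h1 h2

theorem pivPhi_castSucc (i : Fin 3) :
    (fun v => pivPhi a b ν v i.castSucc) = fun v => v i.succ := by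
  fin_cases i <;> rfl

theorem pivPhi_last : (fun v => pivPhi a b ν v (Fin.last 3)) = pivF a b ν := rfl

end Piv

theorem stmt13 (a b ν : ℂ) :
    ∀ w : Fin 4 → ℂ, w 1 ≠ 0 → w 2 ≠ 0 → w 3 ≠ 0 →
      ∀ i j : Fin 4,
        ∑ k : Fin 4, ∑ l : Fin 4,
          cpderiv (fun v => pivPhi a b ν v i) k w
            * PivPi ν w k l
            * cpderiv (fun v => pivPhi a b ν v j) l w
        = PivPi ν (pivPhi a b ν w) i j := by
  intro w h1 h2 h3 i j
  change structureBracket (PivPi ν) (fun v => pivPhi a b ν v i) (fun v => pivPhi a b ν v j) w = _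
  have antisymm := PivPi_transpose ν
  induction i using Fin.lastCases with
  | last =>
    induction j using Fin.lastCases with
    | last => rw [structureBracket_self (antisymm w), PivPi_diag]
    | cast j =>
      rw [structureBracket_swap (antisymm w), pivPhi_castSucc, pivPhi_last,
        structureBracket_coord_succ_pivF a b ν h1 h2 h3]
      exact (congrFun₂ (antisymm (pivPhi a b ν w)) j.castSucc (Fin.last 3)).symm
  | cast i =>
    rw [pivPhi_castSucc]
    induction j using Fin.lastCases with
    | last => rw [pivPhi_last, structureBracket_coord_succ_pivF a b ν h1 h2 h3]
    | cast j => rw [pivPhi_castSucc, structureBracket_coord_coord, PivPi_succ_succ a b]
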